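/- Let k be a positive integer, let G be a finite simple graph, let P = (X_1,…,X_l) be a path decomposition of G in which every bag has size at most k, and let S be a nonempty subset of V(G). Then the number of S-branches H such that S ⊄ X_{a(H)} is at most k. -/

import Mathlib

/-!
Let `s₀ ∈ S` be a vertex whose first bag `X t` comes latest among the vertices of `S`. An `S`-branch
`C` shares a bag with every `s ∈ S`. If `t ≤ a(C)`, then each `s ∈ S` has appeared by the time `C`
does and has not vanished yet, so `S ⊆ X (a(C))`. Otherwise `C` meets a bag before `t` and, together
with `s₀`, a bag at or after `t`; being connected, it meets `X t` itself. So the branches with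
`S ⊄ X (a(C))` all meet the single bag `X t`, and being disjoint they number at most `|X t|`.
-/

open SimpleGraph

variable {V : Type*}

/-- `N_G(Y)`: the set of vertices outside `Y` having a neighbor in `Y`. -/
def nbhdSet (G : SimpleGraph V) (Y : Set V) : Set V :=
  {v | v ∉ Y ∧ ∃ u ∈ Y, G.Adj u v}

/-- `C` is a connected component of the subgraph of `G` induced by `U`. -/
def IsCompIn (G : SimpleGraph V) (U C : Set V) : Prop :=
  C.Nonempty ∧ C ⊆ U ∧ (G.induce C).Connected ∧
    ∀ u ∈ C, ∀ v ∈ U, G.Adj u v → v ∈ C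

/-- `C` is a connected component of `G - S`. -/
def IsCompOf (G : SimpleGraph V) (S C : Set V) : Prop :=
  IsCompIn G Sᶜ C

/-- `C` is an `S`-branch: a connected component of `G - S` with `N_G(C) = S`. -/
def IsBranch (G : SimpleGraph V) (S C : Set V) : Prop :=
  IsCompOf G S C ∧ nbhdSet G C = S

/-- `S` is a bottleneck (for the width parameter `k`): a nonempty set with
at least `2k+1` `S`-branches. -/
def IsBottleneck (G : SimpleGraph V) (k : ℕ) (S : Set V) : Prop :=
  S.Nonempty ∧ 2 * k + 1 ≤ {C : Set V | IsBranch G S C}.ncard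

/-- `(X 0, …, X (l-1))` is a path decomposition of `G`. -/
def IsPathDecomp (G : SimpleGraph V) (l : ℕ) (X : ℕ → Set V) : Prop :=
  (∀ v, ∃ i < l, v ∈ X i) ∧
  (∀ u v, G.Adj u v → ∃ i < l, u ∈ X i ∧ v ∈ X i) ∧
  (∀ i j m, i ≤ j → j ≤ m → m < l → X i ∩ X m ⊆ X j)

/-- The width of a path decomposition: the maximum bag size minus one. -/
noncomputable def pdWidth (l : ℕ) (X : ℕ → Set V) : ℕ :=
  ((Finset.range l).sup fun i => (X i).ncard) - 1

/-- The set of indices of bags meeting the vertex set `C`. -/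
def supp (l : ℕ) (X : ℕ → Set V) (C : Set V) : Set ℕ :=
  {t | t < l ∧ (C ∩ X t).Nonempty}

/-- `a(C)`: the first index of a bag meeting `C`. -/
noncomputable def firstIdx (l : ℕ) (X : ℕ → Set V) (C : Set V) : ℕ :=
  sInf (supp l X C)

/-- `b(C)`: the last index of a bag meeting `C`. -/
noncomputable def lastIdx (l : ℕ) (X : ℕ → Set V) (C : Set V) : ℕ :=
  sSup (supp l X C)

/-- `C` is an in-branch of `S` with respect to the decomposition:
an `S`-branch with `S ⊆ X (a C)` and `S ⊆ X (b C)`. -/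
def IsInBranch (G : SimpleGraph V) (l : ℕ) (X : ℕ → Set V) (S C : Set V) : Prop :=
  IsBranch G S C ∧ S ⊆ X (firstIdx l X C) ∧ S ⊆ X (lastIdx l X C)

/-- `α(S)`: the minimum of `a(H)` over in-branches `H` of `S`. -/
noncomputable def botStart (G : SimpleGraph V) (l : ℕ) (X : ℕ → Set V) (S : Set V) : ℕ :=
  sInf {i | ∃ C, IsInBranch G l X S C ∧ i = firstIdx l X C}

/-- `β(S)`: the maximum of `b(H)` over in-branches `H` of `S`. -/
noncomputable def botEnd (G : SimpleGraph V) (l : ℕ) (X : ℕ → Set V) (S : Set V) : ℕ :=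
  sSup {i | ∃ C, IsInBranch G l X S C ∧ i = lastIdx l X C}

/-- The interval `I(S,P) = [α(S), β(S)]` of a bottleneck `S`. -/
noncomputable def botInterval (G : SimpleGraph V) (l : ℕ) (X : ℕ → Set V) (S : Set V) : Set ℕ :=
  Set.Icc (botStart G l X S) (botEnd G l X S)

/-- A pre-branch of `S`. -/
def IsPreBranch (G : SimpleGraph V) (l : ℕ) (X : ℕ → Set V) (S C : Set V) : Prop :=
  IsBranch G S C ∧ ¬ IsInBranch G l X S C ∧ firstIdx l X C < botStart G l X S

/-- A post-branch of `S`. -/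
def IsPostBranch (G : SimpleGraph V) (l : ℕ) (X : ℕ → Set V) (S C : Set V) : Prop :=
  IsBranch G S C ∧ ¬ IsInBranch G l X S C ∧
    botStart G l X S ≤ firstIdx l X C ∧ botEnd G l X S < lastIdx l X C

/-- `C` waits in the interval `[i, j]` of the decomposition. -/
def WaitsIn (X : ℕ → Set V) (C : Set V) (i j : ℕ) : Prop :=
  ∀ t, i ≤ t → t ≤ j → C ∩ X t = C ∩ X i

/-- The decomposition is `S`-structured: every component of `G - S` that is not an
`S`-branch, and every pre- or post-branch of `S`, waits in `I(S,P)`. -/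
def IsStructured (G : SimpleGraph V) (l : ℕ) (X : ℕ → Set V) (S : Set V) : Prop :=
  ∀ C : Set V,
    ((IsCompOf G S C ∧ ¬ IsBranch G S C) ∨ IsPreBranch G l X S C ∨ IsPostBranch G l X S C) →
    WaitsIn X C (botStart G l X S) (botEnd G l X S)

/-- The decomposition is `I`-connected: every connected component of the subgraph
induced by any prefix of bags contains a vertex of `I`. -/
def IsIConn (G : SimpleGraph V) (l : ℕ) (X : ℕ → Set V) (I : Set V) : Prop :=
  ∀ i < l, ∀ C : Set V, IsCompIn G {v | ∃ j ≤ i, v ∈ X j} C → (C ∩ I).Nonempty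

lemma encard_le_of_pairwiseDisjoint_of_inter_nonempty {ι α : Type*} {s : Set ι} {f : ι → Set α}
    {t : Set α} (hs : s.PairwiseDisjoint f) (ht : ∀ i ∈ s, (f i ∩ t).Nonempty) :
    s.encard ≤ t.encard := by
  choose g hgf hgt using fun i : s => ht i i.2
  refine Function.Embedding.encard_le ⟨fun i => ⟨g i, hgt i⟩, fun i j hij => ?_⟩
  have hg : g i = g j := congrArg Subtype.val hij
  exact Subtype.ext (hs.elim_set i.2 j.2 (g i) (hgf i) (hg ▸ hgf j))

section

variable {G : SimpleGraph V} {U S C D : Set V} {l : ℕ} {X : ℕ → Set V}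

lemma exists_adj_mem_notMem_of_preconnected_induce (hC : (G.induce C).Preconnected) {A : Set V}
    {x y : V} (hx : x ∈ C) (hxA : x ∈ A) (hy : y ∈ C) (hyA : y ∉ A) :
    ∃ u ∈ C, ∃ v ∈ C, G.Adj u v ∧ u ∈ A ∧ v ∉ A := by
  obtain ⟨w⟩ := hC ⟨x, hx⟩ ⟨y, hy⟩
  obtain ⟨d, -, hu, hv⟩ := w.exists_boundary_dart (Subtype.val ⁻¹' A) hxA hyA
  exact ⟨d.fst, d.fst.2, d.snd, d.snd.2, d.adj, hu, hv⟩

lemma IsCompIn.subset_of_inter_nonempty (hC : IsCompIn G U C) (hD : IsCompIn G U D)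
    (hCD : (C ∩ D).Nonempty) : C ⊆ D := by
  obtain ⟨-, hCU, hconn, -⟩ := hC
  obtain ⟨-, -, -, hclosed⟩ := hD
  obtain ⟨x, hxC, hxD⟩ := hCD
  intro y hyC
  by_contra hyD
  obtain ⟨u, -, v, hvC, huv, huD, hvD⟩ :=
    exists_adj_mem_notMem_of_preconnected_induce hconn.preconnected hxC hxD hyC hyD
  exact hvD (hclosed u huD v (hCU hvC) huv)

lemma pairwiseDisjoint_isCompIn (G : SimpleGraph V) (U : Set V) :
    {C | IsCompIn G U C}.PairwiseDisjoint id := by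
  intro C hC D hD hne
  by_contra hnot
  have hCD : (C ∩ D).Nonempty := Set.not_disjoint_iff_nonempty_inter.1 hnot
  exact hne ((hC.subset_of_inter_nonempty hD hCD).antisymm
    (hD.subset_of_inter_nonempty hC (Set.inter_comm C D ▸ hCD)))

lemma mem_supp_singleton {v : V} {i : ℕ} : i ∈ supp l X {v} ↔ i < l ∧ v ∈ X i := by
  simp only [supp, Set.mem_ofPred_eq, Set.singleton_inter_nonempty]

lemma firstIdx_mem_supp (h : (supp l X C).Nonempty) : firstIdx l X C ∈ supp l X C :=
  Nat.sInf_mem h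

lemma firstIdx_le_of_mem_supp {i : ℕ} (hi : i ∈ supp l X C) : firstIdx l X C ≤ i :=
  Nat.sInf_le hi

namespace IsPathDecomp

lemma ordConnected_supp (hP : IsPathDecomp G l X) (hC : (G.induce C).Preconnected) :
    (supp l X C).OrdConnected := by
  obtain ⟨-, hedge, hinterval⟩ := hP
  refine ⟨fun i hi m hm j ⟨hij, hjm⟩ => ?_⟩
  obtain ⟨-, x, hxC, hxi⟩ := hi
  obtain ⟨hml, y, hyC, hym⟩ := hm
  refine ⟨hjm.trans_lt hml, ?_⟩
  by_cases hy : y ∈ ⋃ n ≤ j, X n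
  · obtain ⟨n, hnj, hyn⟩ := Set.mem_iUnion₂.1 hy
    exact ⟨y, hyC, hinterval n j m hnj hjm hml ⟨hyn, hym⟩⟩
  · obtain ⟨u, huC, v, -, huv, hu, hv⟩ := exists_adj_mem_notMem_of_preconnected_induce hC hxC
      (Set.mem_iUnion₂.2 ⟨i, hij, hxi⟩) hyC hy
    obtain ⟨n, hnj, hun⟩ := Set.mem_iUnion₂.1 hu
    obtain ⟨q, hql, huq, hvq⟩ := hedge u v huv
    have hjq : j ≤ q := le_of_not_ge fun hqj => hv (Set.mem_iUnion₂.2 ⟨q, hqj, hvq⟩)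
    exact ⟨u, huC, hinterval n j q hnj hjq hql ⟨hun, huq⟩⟩

lemma supp_singleton_nonempty (hP : IsPathDecomp G l X) (v : V) : (supp l X {v}).Nonempty := by
  obtain ⟨i, hi⟩ := hP.1 v
  exact ⟨i, mem_supp_singleton.2 hi⟩

lemma ordConnected_supp_singleton (hP : IsPathDecomp G l X) (v : V) :
    (supp l X {v}).OrdConnected :=
  hP.ordConnected_supp Preconnected.of_subsingleton

lemma exists_isGreatest_firstIdx_singleton (hP : IsPathDecomp G l X) (hS : S.Nonempty) :
    ∃ t, IsGreatest ((fun s => firstIdx l X {s}) '' S) t := by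
  refine BddAbove.exists_isGreatest_of_nonempty ⟨l, ?_⟩ (hS.image _)
  rintro _ ⟨s, -, rfl⟩
  exact (firstIdx_mem_supp (hP.supp_singleton_nonempty s)).1.le

lemma supp_singleton_inter_supp_nonempty (hP : IsPathDecomp G l X) {v : V}
    (hv : v ∈ nbhdSet G C) : (supp l X {v} ∩ supp l X C).Nonempty := by
  obtain ⟨-, u, huC, huv⟩ := hv
  obtain ⟨q, hql, huq, hvq⟩ := hP.2.1 u v huv
  exact ⟨q, mem_supp_singleton.2 ⟨hql, hvq⟩, hql, u, huC, huq⟩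

lemma mem_bag_firstIdx (hP : IsPathDecomp G l X) {v : V} (hv : v ∈ nbhdSet G C)
    (hle : firstIdx l X {v} ≤ firstIdx l X C) : v ∈ X (firstIdx l X C) := by
  obtain ⟨q, hvq, hCq⟩ := hP.supp_singleton_inter_supp_nonempty hv
  have hmem : firstIdx l X C ∈ supp l X {v} := (hP.ordConnected_supp_singleton v).out
    (firstIdx_mem_supp ⟨q, hvq⟩) hvq ⟨hle, firstIdx_le_of_mem_supp hCq⟩
  exact (mem_supp_singleton.1 hmem).2

lemma firstIdx_singleton_mem_supp (hP : IsPathDecomp G l X) (hC : (G.induce C).Preconnected)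
    {v : V} (hv : v ∈ nbhdSet G C) (hle : firstIdx l X C ≤ firstIdx l X {v}) :
    firstIdx l X {v} ∈ supp l X C := by
  obtain ⟨q, hvq, hCq⟩ := hP.supp_singleton_inter_supp_nonempty hv
  exact (hP.ordConnected_supp hC).out (firstIdx_mem_supp ⟨q, hCq⟩) hCq
    ⟨hle, firstIdx_le_of_mem_supp hvq⟩

lemma exists_forall_mem_supp_of_not_subset (hP : IsPathDecomp G l X) (hS : S.Nonempty) :
    ∃ t < l, ∀ C, (G.induce C).Preconnected → S ⊆ nbhdSet G C → ¬ S ⊆ X (firstIdx l X C) →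
      t ∈ supp l X C := by
  obtain ⟨_, ⟨s₀, hs₀, rfl⟩, hmax⟩ := hP.exists_isGreatest_firstIdx_singleton hS
  refine ⟨_, (firstIdx_mem_supp (hP.supp_singleton_nonempty s₀)).1, fun C hC hSC hnot => ?_⟩
  obtain ⟨s, hs, hsX⟩ := Set.not_subset.1 hnot
  have hlt : firstIdx l X C < firstIdx l X {s} :=
    lt_of_not_ge fun hle => hsX (hP.mem_bag_firstIdx (hSC hs) hle)
  exact hP.firstIdx_singleton_mem_supp hC (hSC hs₀)
    (hlt.le.trans (hmax (Set.mem_image_of_mem _ hs)))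

end IsPathDecomp

end

/-- for a path decomposition with bags of size at most `k` and a
nonempty `S`, at most `k` `S`-branches `H` satisfy `S ⊄ X (a H)`. -/
theorem stmt14 [Fintype V] (k : ℕ) (hk : 1 ≤ k) (G : SimpleGraph V) (l : ℕ)
    (X : ℕ → Set V) (hP : IsPathDecomp G l X) (hw : ∀ i < l, (X i).ncard ≤ k)
    (S : Set V) (hS : S.Nonempty) :
    {C : Set V | IsBranch G S C ∧ ¬ S ⊆ X (firstIdx l X C)}.ncard ≤ k := by
  obtain ⟨t, htl, ht⟩ := hP.exists_forall_mem_supp_of_not_subset hS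
  set branches := {C : Set V | IsBranch G S C ∧ ¬ S ⊆ X (firstIdx l X C)}
  have hdisj : branches.PairwiseDisjoint id :=
    (pairwiseDisjoint_isCompIn G Sᶜ).subset fun C hC => hC.1.1
  have hmeet : ∀ C ∈ branches, (C ∩ X t).Nonempty := fun C ⟨⟨hcomp, hnbhd⟩, hnot⟩ =>
    (ht C hcomp.2.2.1.preconnected hnbhd.ge hnot).2
  calc branches.ncard
      ≤ (X t).ncard := ENat.toNat_le_toNat
        (encard_le_of_pairwiseDisjoint_of_inter_nonempty hdisj hmeet)
        (Set.encard_ne_top_iff.2 (X t).toFinite)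
    _ ≤ k := hw t htl
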